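/- Classification of the current-algebra central terms: Let W : ℤ×ℤ → ℂ satisfy W(m,n) = −W(n,m) for all m, n ∈ ℤ, and let Y : ℤ → ℂ, such that for all m, n, p ∈ ℤ: (i) −n·W(m+n,p) + p·W(m+p,n) = 0 and (ii) −n·Y(m+n) − (i/2)·W(m,n) = 0. Then there exists k ∈ ℂ such that W(m,n) = k·m·δ_{m+n,0} for all m, n ∈ ℤ, and Y(m) = (i/2)·k·δ_{m,0} for all m ∈ ℤ. -/

import Mathlib

/-- Classification of the current-algebra central terms `W(m,n)` (in
`i[P_m, P_n] = W(m,n)`) and `Y(m)` (in `i[P_m, Q] = Y(m)`) subject to the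
Jacobi constraints coming from the Witt action. -/
theorem stmt_6 (W : ℤ → ℤ → ℂ) (Y : ℤ → ℂ)
    (hanti : ∀ m n : ℤ, W m n = - W n m)
    (hi : ∀ m n p : ℤ, -(n : ℂ) * W (m + n) p + (p : ℂ) * W (m + p) n = 0)
    (hii : ∀ m n : ℤ, -(n : ℂ) * Y (m + n) - Complex.I / 2 * W m n = 0) :
    ∃ k : ℂ,
      (∀ m n : ℤ, W m n = k * (m : ℂ) * (if m + n = 0 then 1 else 0)) ∧
      (∀ m : ℤ, Y m = Complex.I / 2 * k * (if m = 0 then 1 else 0)) := by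
  have hI : Complex.I * Complex.I = -1 := Complex.I_mul_I
  have hW : ∀ m n : ℤ, W m n = 2 * Complex.I * n * Y (m + n) := by
    intro m n
    linear_combination (2 * Complex.I) * hii m n + W m n * hI
  have hY : ∀ s : ℤ, s ≠ 0 → Y s = 0 := by
    intro s hs
    have h := hanti s 0
    rw [hW s 0, hW 0 s] at h
    simpa [hs] using h
  refine ⟨-2 * Complex.I * Y 0, ?_, ?_⟩
  · intro m n
    rw [hW m n]
    by_cases h : m + n = 0
    · have hn : n = -m := by omega
      subst hn
      simp
      ring
    · simp [h, hY _ h]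
  · intro m
    by_cases h : m = 0
    · subst h
      simp only [if_true]
      linear_combination Y 0 * hI
    · simp [h, hY _ h]
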